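/- arXiv:2402.01426 — 8 statements merged into one kernel-verified Lean document; each statement's English description precedes it below -/
import Mathlib

section
/- For all real constants a > 0, b > 0, c > 0, the function x ↦ log₂(1 + a/(b + c·x)) (i.e., Real.logb 2 applied to 1 + a/(b + c·x)) is convex on the interval [0, ∞). -/
/-- For all real constants `a > 0`, `b > 0`, `c > 0`, the function
`x ↦ log₂(1 + a / (b + c * x))` is convex on `[0, ∞)`. -/
theorem stmt_0 (a b c : ℝ) (ha : 0 < a) (hb : 0 < b) (hc : 0 < c) :
    ConvexOn ℝ (Set.Ici (0 : ℝ))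
      (fun x : ℝ => Real.logb 2 (1 + a / (b + c * x))) := by
  have hpos : ∀ x : ℝ, 0 ≤ x → 0 < b + c * x := fun x hx => by positivity
  have hpos2 : ∀ x : ℝ, 0 ≤ x → 0 < a + b + c * x := fun x hx => by positivity
  have hl : 0 < Real.log 2 := Real.log_pos (by norm_num)
  have hlin : ∀ d x : ℝ, HasDerivAt (fun x : ℝ => d + c * x) c x := fun d x => by
    simpa using ((hasDerivAt_id x).const_mul c).const_add d
  have h1 : ∀ x : ℝ, 0 ≤ x → HasDerivAt
      (fun x : ℝ => (Real.log (a + b + c * x) - Real.log (b + c * x)) / Real.log 2)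
      ((c / (a + b + c * x) - c / (b + c * x)) / Real.log 2) x := fun x hx =>
    (((hlin (a + b) x).log (hpos2 x hx).ne').sub ((hlin b x).log (hpos x hx).ne')).div_const _
  have h2 : ∀ x : ℝ, 0 ≤ x → HasDerivAt
      (fun x : ℝ => (c / (a + b + c * x) - c / (b + c * x)) / Real.log 2)
      (((0 * (a + b + c * x) - c * c) / (a + b + c * x) ^ 2
        - (0 * (b + c * x) - c * c) / (b + c * x) ^ 2) / Real.log 2) x := fun x hx =>
    (((hasDerivAt_const x c).div (hlin (a + b) x) (hpos2 x hx).ne').sub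
      ((hasDerivAt_const x c).div (hlin b x) (hpos x hx).ne')).div_const _
  have key : ConvexOn ℝ (Set.Ici (0 : ℝ))
      (fun x : ℝ => (Real.log (a + b + c * x) - Real.log (b + c * x)) / Real.log 2) := by
    refine convexOn_of_hasDerivWithinAt2_nonneg (convex_Ici 0)
      (fun x hx => (h1 x hx).continuousAt.continuousWithinAt)
      (fun x hx => (h1 x (interior_subset hx)).hasDerivWithinAt)
      (fun x hx => (h2 x (interior_subset hx)).hasDerivWithinAt) ?_
    intro x hx
    have hx0 : 0 ≤ x := interior_subset hx
    have p := hpos x hx0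
    have : c * c / (a + b + c * x) ^ 2 ≤ c * c / (b + c * x) ^ 2 := by
      gcongr
      linarith
    apply div_nonneg _ hl.le
    rw [zero_mul, zero_mul, zero_sub, neg_div, neg_div]
    linarith
  refine key.congr ?_
  intro x hx
  have p := hpos x hx
  have q := hpos2 x hx
  simp only [Real.logb]
  rw [← Real.log_div q.ne' p.ne']
  congr 2
  field_simp
  ring
end

section
/- Let (Ω, 𝔉, P) be a probability space and T : Ω → ℝ a nonnegative integrable random variable (representing tr(R²) for the random normalized spatial correlation matrix R). Let M ≥ 1 and r ≥ 1 be integers (cast to real numbers), and let ρ > 0, β > 0, and 0 < τ_p < τ_c be real numbers. Then E[ ((τ_c − τ_p)/τ_c) · log₂(1 + ρ·M²·β² / (ρ·β²·T + M·β + (1/τ_p)·(M·β + r/ρ))) ] ≥ ((τ_c − τ_p)/τ_c) · log₂(1 + ρ·M² / (ρ·E[T] + M/β + (1/τ_p)·(M/β + r/(ρ·β²)))). -/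
open MeasureTheory

lemma tangent_aux (a u v : ℝ) (ha : 0 < a) (hu : 0 < u) (hv : 0 < v) :
    Real.log (1 + a / v) - a / (v * (v + a)) * (u - v) ≤ Real.log (1 + a / u) := by
  have h1 : 0 < 1 + a / v := by positivity
  have h2 : 0 < 1 + a / u := by positivity
  have h := Real.log_le_sub_one_of_pos (div_pos h1 h2)
  rw [Real.log_div h1.ne' h2.ne'] at h
  have h3 : (1 + a / v) / (1 + a / u) - 1 ≤ a / (v * (v + a)) * (u - v) := by
    have : a / (v * (v + a)) * (u - v) - ((1 + a / v) / (1 + a / u) - 1)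
        = - (a * (u - v)) / v * (1 / (u + a) - 1 / (v + a)) := by
      field_simp
      ring
    have h4 : - (a * (u - v)) / v * (1 / (u + a) - 1 / (v + a))
        = a * (u - v) ^ 2 / (v * (u + a) * (v + a)) := by
      field_simp
      ring
    have h5 : 0 ≤ a * (u - v) ^ 2 / (v * (u + a) * (v + a)) := by positivity
    linarith
  linarith

lemma jensen_aux {Ω : Type*} [MeasurableSpace Ω] (P : Measure Ω) [IsProbabilityMeasure P]
    (T : Ω → ℝ) (hT : Integrable T P) (hTnn : ∀ ω, 0 ≤ T ω) (a b c : ℝ)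
    (ha : 0 < a) (hb : 0 < b) (hc : 0 < c) :
    Real.log (1 + a / (c * (∫ ω, T ω ∂P) + b)) ≤ ∫ ω, Real.log (1 + a / (c * T ω + b)) ∂P := by
  have hE : 0 ≤ ∫ ω, T ω ∂P := integral_nonneg hTnn
  set m := ∫ ω, T ω ∂P with hm
  have hv : 0 < c * m + b := by positivity
  have hint : Integrable (fun ω => Real.log (1 + a / (c * T ω + b))) P := by
    refine Integrable.of_bound (C := Real.log (1 + a / b)) ?_ ?_
    · have := hT.aestronglyMeasurable.aemeasurable
      exact (Real.measurable_log.comp_aemeasurable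
        (((this.const_mul c).add_const b).const_div a |>.const_add 1)).aestronglyMeasurable
    · refine Filter.Eventually.of_forall fun ω => ?_
      have h0 : 0 ≤ c * T ω := mul_nonneg hc.le (hTnn ω)
      have h1 : 0 ≤ a / (c * T ω + b) := by positivity
      rw [Real.norm_of_nonneg (Real.log_nonneg (by linarith))]
      apply Real.log_le_log (by linarith)
      gcongr
      linarith
  set k := a / ((c * m + b) * (c * m + b + a)) with hk
  have hi2 : Integrable (fun ω => k * c * (T ω - m)) P :=
    (hT.sub (integrable_const m)).const_mul _
  have key : ∫ ω, (Real.log (1 + a / (c * m + b)) - k * c * (T ω - m)) ∂P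
      ≤ ∫ ω, Real.log (1 + a / (c * T ω + b)) ∂P := by
    refine integral_mono ((integrable_const _).sub hi2) hint fun ω => ?_
    have h0 : 0 ≤ c * T ω := mul_nonneg hc.le (hTnn ω)
    have := tangent_aux a (c * T ω + b) (c * m + b) ha (by linarith) hv
    rw [← hk] at this
    have e : k * (c * T ω + b - (c * m + b)) = k * c * (T ω - m) := by ring
    rw [e] at this
    exact this
  rw [integral_sub (integrable_const _) hi2, integral_const_mul,
    integral_sub hT (integrable_const m)] at key
  simpa [← hm] using key

/-- Lower bound on the average spectral efficiency with RS-LS channel estimation,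
obtained from Jensen's inequality (equations (15)-(16) of the paper). -/
theorem stmt_2 {Ω : Type*} [MeasurableSpace Ω] (P : Measure Ω) [IsProbabilityMeasure P]
    (T : Ω → ℝ) (hT : Integrable T P) (hTnn : ∀ ω, 0 ≤ T ω)
    (M r : ℕ) (hM : 1 ≤ M) (hr : 1 ≤ r)
    (ρ β τp τc : ℝ) (hρ : 0 < ρ) (hβ : 0 < β) (hτp : 0 < τp) (hτpc : τp < τc) :
    ∫ ω, ((τc - τp) / τc) *
        Real.logb 2 (1 + ρ * (M : ℝ) ^ 2 * β ^ 2 /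
          (ρ * β ^ 2 * T ω + (M : ℝ) * β + (1 / τp) * ((M : ℝ) * β + (r : ℝ) / ρ))) ∂P ≥
      ((τc - τp) / τc) *
        Real.logb 2 (1 + ρ * (M : ℝ) ^ 2 /
          (ρ * (∫ ω, T ω ∂P) + (M : ℝ) / β +
            (1 / τp) * ((M : ℝ) / β + (r : ℝ) / (ρ * β ^ 2)))) := by
  have hM' : (0 : ℝ) < M := by exact_mod_cast hM
  have hr' : (0 : ℝ) < r := by exact_mod_cast hr
  have hτc : 0 < τc := hτp.trans hτpc
  have hb : 0 < (M : ℝ) / β + (1 / τp) * ((M : ℝ) / β + (r : ℝ) / (ρ * β ^ 2)) := by positivity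
  have h := jensen_aux P T hT hTnn (ρ * (M : ℝ) ^ 2) _ ρ (by positivity) hb hρ
  have hpt : ∀ ω, ρ * (M : ℝ) ^ 2 * β ^ 2 /
      (ρ * β ^ 2 * T ω + (M : ℝ) * β + (1 / τp) * ((M : ℝ) * β + (r : ℝ) / ρ))
      = ρ * (M : ℝ) ^ 2 / (ρ * T ω +
        ((M : ℝ) / β + (1 / τp) * ((M : ℝ) / β + (r : ℝ) / (ρ * β ^ 2)))) := by
    intro ω
    have e : ρ * β ^ 2 * T ω + (M : ℝ) * β + (1 / τp) * ((M : ℝ) * β + (r : ℝ) / ρ)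
        = (ρ * T ω + ((M : ℝ) / β + (1 / τp) * ((M : ℝ) / β + (r : ℝ) / (ρ * β ^ 2))))
          * β ^ 2 := by
      field_simp
      ring
    rw [e, mul_div_mul_right _ _ (by positivity)]
  simp_rw [hpt, add_assoc (ρ * (∫ ω, T ω ∂P))]
  rw [integral_const_mul, ge_iff_le]
  refine mul_le_mul_of_nonneg_left ?_ (div_nonneg (by linarith) hτc.le)
  simp only [Real.logb]
  rw [integral_div]
  exact div_le_div_of_nonneg_right h (Real.log_nonneg (by norm_num))
end

section
/- Let A > 0, B > 0, and τ_c > 0 be real constants, and define SE_avg(τ) = ((τ_c − τ)/τ_c) · log₂(1 + 1/(A + B/τ)) for τ > 0. Then for every τ > 0, the second derivative of SE_avg at τ equals −B·( ((2A² + 2A)·τ_c + (2A + 1)·B)·τ + (2A + 1)·B·τ_c + 2B² ) / ( ln(2) · τ_c · (A·τ + B)² · ((A + 1)·τ + B)² ). -/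
/-- The second derivative of the average-SE function
`SE_avg(τ) = ((τ_c − τ)/τ_c) · log₂(1 + 1/(A + B/τ))` at any `τ > 0`
(equation (24) of the paper). -/
theorem stmt_3 (A B τc : ℝ) (hA : 0 < A) (hB : 0 < B) (hτc : 0 < τc)
    (τ : ℝ) (hτ : 0 < τ) :
    deriv (deriv (fun t : ℝ => ((τc - t) / τc) * Real.logb 2 (1 + 1 / (A + B / t)))) τ =
      -(B * (((2 * A ^ 2 + 2 * A) * τc + (2 * A + 1) * B) * τ
            + (2 * A + 1) * B * τc + 2 * B ^ 2)) /
        (Real.log 2 * τc * (A * τ + B) ^ 2 * ((A + 1) * τ + B) ^ 2) := by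
  have hl : Real.log 2 ≠ 0 := (Real.log_pos (by norm_num)).ne'
  have hc : τc ≠ 0 := hτc.ne'
  have hP : ∀ t : ℝ, 0 < t → 0 < A * t + B := fun t ht => by positivity
  have hQ : ∀ t : ℝ, 0 < t → 0 < (A + 1) * t + B := fun t ht => by positivity
  have dP : ∀ t : ℝ, HasDerivAt (fun t : ℝ => A * t + B) A t := fun t => by
    simpa using ((hasDerivAt_id t).const_mul A).add_const B
  have dQ : ∀ t : ℝ, HasDerivAt (fun t : ℝ => (A + 1) * t + B) (A + 1) t := fun t => by
    simpa using ((hasDerivAt_id t).const_mul (A + 1)).add_const B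
  have dL : ∀ t : ℝ, 0 < t → HasDerivAt
      (fun t : ℝ => Real.log ((A + 1) * t + B) - Real.log (A * t + B))
      (B / ((A * t + B) * ((A + 1) * t + B))) t := fun t ht => by
    have h1 := (hP t ht).ne'
    have h2 := (hQ t ht).ne'
    have h := ((dQ t).log h2).fun_sub ((dP t).log h1)
    refine h.congr_deriv ?_
    rw [div_sub_div _ _ h2 h1, mul_comm (A * t + B)]
    congr 1
    ring
  have dM : ∀ t : ℝ, HasDerivAt (fun t : ℝ => (τc - t) / (τc * Real.log 2))
      (-1 / (τc * Real.log 2)) t := fun t => by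
    simpa using ((hasDerivAt_id t).const_sub τc).div_const (τc * Real.log 2)
  have e : ∀ t : ℝ, 0 < t → ((τc - t) / τc) * Real.logb 2 (1 + 1 / (A + B / t)) =
      (τc - t) / (τc * Real.log 2) *
        (Real.log ((A + 1) * t + B) - Real.log (A * t + B)) := fun t ht => by
    have h1 := (hP t ht).ne'
    have h2 := (hQ t ht).ne'
    have h3 : 1 + 1 / (A + B / t) = ((A + 1) * t + B) / (A * t + B) := by
      have : A + B / t = (A * t + B) / t := by field_simp
      rw [this, one_div_div, eq_div_iff h1, add_mul, div_mul_cancel₀ _ h1]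
      ring
    rw [h3, Real.logb, Real.log_div h2 h1, div_mul_div_comm, div_mul_eq_mul_div]
  have d1 : ∀ t : ℝ, 0 < t →
      deriv (fun t : ℝ => ((τc - t) / τc) * Real.logb 2 (1 + 1 / (A + B / t))) t =
      -1 / (τc * Real.log 2) * (Real.log ((A + 1) * t + B) - Real.log (A * t + B)) +
      (τc - t) / (τc * Real.log 2) * (B / ((A * t + B) * ((A + 1) * t + B))) := fun t ht => by
    rw [Filter.EventuallyEq.deriv_eq (Filter.eventually_of_mem (Ioi_mem_nhds ht) e)]
    exact ((dM t).mul (dL t ht)).deriv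
  rw [Filter.EventuallyEq.deriv_eq (Filter.eventually_of_mem (Ioi_mem_nhds hτ) d1)]
  have h1 := (hP τ hτ).ne'
  have h2 := (hQ τ hτ).ne'
  have dR := (hasDerivAt_const τ B).fun_div ((dP τ).fun_mul (dQ τ)) (mul_ne_zero h1 h2)
  have dF := ((dL τ hτ).const_mul (-1 / (τc * Real.log 2))).fun_add ((dM τ).fun_mul dR)
  rw [dF.deriv]
  generalize hp : A * τ + B = P at *
  generalize hq : (A + 1) * τ + B = Q at *
  field_simp
  subst hp hq
  ring
end

section
/- Let A > 0, B > 0, and τ_c > 0 be real constants, and define SE_avg(τ) = ((τ_c − τ)/τ_c) · log₂(1 + 1/(A + B/τ)) for τ > 0. Then SE_avg is strictly concave on the open interval (0, ∞). -/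
/-- The average-SE function `SE_avg(τ) = ((τ_c − τ)/τ_c) · log₂(1 + 1/(A + B/τ))`
is strictly concave on `(0, ∞)` (first claim of Lemma 2 of the paper). -/
theorem stmt_4 (A B τc : ℝ) (hA : 0 < A) (hB : 0 < B) (hτc : 0 < τc) :
    StrictConcaveOn ℝ (Set.Ioi (0 : ℝ))
      (fun τ : ℝ => ((τc - τ) / τc) * Real.logb 2 (1 + 1 / (A + B / τ))) := by
  have hl : 0 < Real.log 2 := Real.log_pos (by norm_num)
  have hP : ∀ x : ℝ, 0 < x → 0 < (A + 1) * x + B := fun x hx => by positivity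
  have hQ : ∀ x : ℝ, 0 < x → 0 < A * x + B := fun x hx => by positivity
  have hdP : ∀ x : ℝ, HasDerivAt (fun y : ℝ => (A + 1) * y + B) (A + 1) x := fun x => by
    simpa using ((hasDerivAt_id x).const_mul (A + 1)).add_const B
  have hdQ : ∀ x : ℝ, HasDerivAt (fun y : ℝ => A * y + B) A x := fun x => by
    simpa using ((hasDerivAt_id x).const_mul A).add_const B
  have hdT : ∀ x : ℝ, HasDerivAt (fun y : ℝ => τc - y) (-1) x := fun x => by
    simpa using (hasDerivAt_id x).const_sub τc
  have hdL : ∀ x : ℝ, 0 < x → HasDerivAt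
      (fun y : ℝ => Real.log ((A + 1) * y + B) - Real.log (A * y + B))
      (B / (((A + 1) * x + B) * (A * x + B))) x := fun x hx => by
    have h1 := hP x hx
    have h2 := hQ x hx
    refine (((hdP x).log h1.ne').sub ((hdQ x).log h2.ne')).congr_deriv ?_
    rw [div_sub_div _ _ h1.ne' h2.ne']
    congr 1
    ring
  have hdg : ∀ x : ℝ, 0 < x → HasDerivAt
      (fun y : ℝ => (τc - y) * (Real.log ((A + 1) * y + B) - Real.log (A * y + B)))
      (-1 * (Real.log ((A + 1) * x + B) - Real.log (A * x + B)) +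
        (τc - x) * (B / (((A + 1) * x + B) * (A * x + B)))) x := fun x hx =>
    (hdT x).mul (hdL x hx)
  have hg : StrictConcaveOn ℝ (Set.Ioi (0 : ℝ))
      (fun y : ℝ => (τc - y) * (Real.log ((A + 1) * y + B) - Real.log (A * y + B))) := by
    apply strictConcaveOn_of_deriv2_neg' (convex_Ioi 0)
    · exact fun x hx => (hdg x hx).continuousAt.continuousWithinAt
    · intro x hx
      have hx0 : 0 < x := hx
      have h1 := hP x hx
      have h2 := hQ x hx
      have hE : deriv (fun y : ℝ => (τc - y) *
          (Real.log ((A + 1) * y + B) - Real.log (A * y + B))) =ᶠ[nhds x]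
          (fun x => -1 * (Real.log ((A + 1) * x + B) - Real.log (A * x + B)) +
        (τc - x) * (B / (((A + 1) * x + B) * (A * x + B)))) := by
        filter_upwards [Ioi_mem_nhds hx0] with y hy
        exact (hdg y hy).deriv
      have hd2 := ((hdL x hx).const_mul (-1)).add ((hdT x).mul
        ((hasDerivAt_const x B).div ((hdP x).mul (hdQ x)) (mul_pos h1 h2).ne'))
      have hd3 := (hd2.congr_of_eventuallyEq hE).deriv
      change deriv (deriv _) x < 0
      rw [hd3]
      have key : ∀ P Q : ℝ, P = (A + 1) * x + B → Q = A * x + B → 0 < P → 0 < Q →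
          -1 * (B / (P * Q)) + (-1 * (B / (P * Q)) + (τc - x) *
            ((0 * (P * Q) - B * ((A + 1) * Q + P * A)) / (P * Q) ^ 2)) < 0 := by
        intro P Q eP eQ p q
        have e : -1 * (B / (P * Q)) + (-1 * (B / (P * Q)) + (τc - x) *
            ((0 * (P * Q) - B * ((A + 1) * Q + P * A)) / (P * Q) ^ 2)) =
            -(B * (B * (P + Q) + τc * ((A + 1) * Q + P * A)) / (P * Q) ^ 2) := by
          field_simp
          rw [eP, eQ]
          ring
        rw [e, neg_lt_zero]
        positivity
      exact key _ _ rfl rfl h1 h2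
  have hc : 0 < (τc * Real.log 2)⁻¹ := by positivity
  have heq : ∀ x ∈ Set.Ioi (0 : ℝ),
      ((τc - x) / τc) * Real.logb 2 (1 + 1 / (A + B / x)) = (τc * Real.log 2)⁻¹ *
      ((τc - x) * (Real.log ((A + 1) * x + B) - Real.log (A * x + B))) := by
    intro x hx
    have hx0 : 0 < x := hx
    have h1 := hP x hx
    have h2 := hQ x hx
    have e : 1 + 1 / (A + B / x) = ((A + 1) * x + B) / (A * x + B) := by
      have : A + B / x = (A * x + B) / x := by field_simp
      rw [this, one_div_div, eq_div_iff h2.ne', add_mul, div_mul_cancel₀ _ h2.ne']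
      ring
    rw [e, Real.logb, Real.log_div h1.ne' h2.ne']
    field_simp
  refine ⟨convex_Ioi 0, ?_⟩
  intro x hx y hy hxy a b ha hb hab
  have h := hg.2 hx hy hxy ha hb hab
  have hm := (convex_Ioi (0 : ℝ)) hx hy ha.le hb.le hab
  have h' := mul_lt_mul_of_pos_left h hc
  simp only [heq x hx, heq y hy, heq _ hm]
  refine lt_of_eq_of_lt ?_ h'
  simp only [smul_eq_mul]
  ring
end

section
/- Let A > 0, B > 0, and τ_c > 0 be real constants, and define SE_avg(τ) = ((τ_c − τ)/τ_c) · log₂(1 + 1/(A + B/τ)) for τ > 0. Then there exists a unique τ_opt with 0 < τ_opt < τ_c such that SE_avg(τ) < SE_avg(τ_opt) for every τ with 0 < τ < τ_c and τ ≠ τ_opt. -/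
lemma aux_mono (A B x y : ℝ) (hA : 0 < A) (hB : 0 < B) (hx : 0 ≤ x) (hxy : x < y) :
    x / (A * x + B) < y / (A * y + B) := by
  have hy : 0 < y := lt_of_le_of_lt hx hxy
  rw [div_lt_div_iff₀ (by positivity) (by positivity)]
  nlinarith

lemma aux_conc (A B x y : ℝ) (hA : 0 < A) (hB : 0 < B) (hx : 0 < x) (hy : 0 < y) :
    x / (A * x + B) + y / (A * y + B) ≤ 2 * (((x + y) / 2) / (A * ((x + y) / 2) + B)) := by
  have h : 2 * (((x + y) / 2) / (A * ((x + y) / 2) + B)) - (x / (A * x + B) + y / (A * y + B))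
      = A * B * (x - y) ^ 2 / ((A * x + B) * (A * y + B) * (A * x + B + (A * y + B))) := by
    have h1 : A * x + B ≠ 0 := by positivity
    have h2 : A * y + B ≠ 0 := by positivity
    have h3 : A * x + B + (A * y + B) ≠ 0 := by positivity
    have h4 : A * ((x + y) / 2) + B = (A * x + B + (A * y + B)) / 2 := by ring
    rw [h4]
    field_simp
    ring
  have h' : 0 ≤ A * B * (x - y) ^ 2 / ((A * x + B) * (A * y + B) * (A * x + B + (A * y + B))) := by
    positivity
  linarith

lemma aux_mid (A B c x y : ℝ) (hA : 0 < A) (hB : 0 < B) (hx : 0 < x) (hxy : x < y) (hy : y < c) :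
    (c - x) * Real.log (1 + x / (A * x + B)) + (c - y) * Real.log (1 + y / (A * y + B))
      < 2 * ((c - (x + y) / 2) * Real.log (1 + ((x + y) / 2) / (A * ((x + y) / 2) + B))) := by
  have hy0 : 0 < y := hx.trans hxy
  have hm := aux_mono A B x y hA hB hx.le hxy
  have hc := aux_conc A B x y hA hB hx hy0
  have hp : 0 < x / (A * x + B) := by positivity
  set p := x / (A * x + B)
  set q := y / (A * y + B)
  set r := ((x + y) / 2) / (A * ((x + y) / 2) + B)
  have hl : Real.log (1 + p) < Real.log (1 + q) := Real.log_lt_log (by linarith) (by linarith)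
  have hs : (1 + p) * (1 + q) < (1 + r) * (1 + r) := by
    nlinarith [mul_pos (sub_pos.2 hm) (sub_pos.2 hm)]
  have hl2 := Real.log_lt_log (by nlinarith) hs
  rw [Real.log_mul (by linarith) (by linarith), Real.log_mul (by linarith) (by linarith)] at hl2
  have h1 : 0 < c - (x + y) / 2 := by linarith
  nlinarith [mul_lt_mul_of_pos_left hl2 h1, mul_pos (sub_pos.2 hl) (sub_pos.2 hxy)]

lemma aux_ex (A B c : ℝ) (hA : 0 < A) (hB : 0 < B) (hc : 0 < c) :
    ∃ t, 0 < t ∧ t < c ∧ ∀ s, 0 < s → s < c → 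
      (c - s) * Real.log (1 + s / (A * s + B)) ≤ (c - t) * Real.log (1 + t / (A * t + B)) := by
  have hcont : ContinuousOn (fun s => (c - s) * Real.log (1 + s / (A * s + B))) (Set.Icc 0 c) := by
    have h1 : ∀ s ∈ Set.Icc 0 c, A * s + B ≠ 0 := fun s hs => by
      have := hs.1
      positivity
    have h2 : ∀ s ∈ Set.Icc 0 c, 1 + s / (A * s + B) ≠ 0 := fun s hs => by
      have := hs.1
      positivity
    refine ContinuousOn.mul (by fun_prop) (ContinuousOn.log ?_ h2)
    exact continuousOn_const.add (continuousOn_id.div (by fun_prop) h1)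
  obtain ⟨t, ht, hmax⟩ := isCompact_Icc.exists_isMaxOn ⟨0, by simp [hc.le]⟩ hcont
  have hmax' : ∀ s ∈ Set.Icc 0 c, (c - s) * Real.log (1 + s / (A * s + B))
      ≤ (c - t) * Real.log (1 + t / (A * t + B)) := fun s hs => hmax hs
  have hpos : 0 < (c - c / 2) * Real.log (1 + (c / 2) / (A * (c / 2) + B)) := by
    apply mul_pos (by linarith)
    apply Real.log_pos
    have : 0 < (c / 2) / (A * (c / 2) + B) := by positivity
    linarith
  have hp := lt_of_lt_of_le hpos (hmax' (c / 2) ⟨by linarith, by linarith⟩)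
  refine ⟨t, lt_of_le_of_ne ht.1 ?_, lt_of_le_of_ne ht.2 ?_, fun s h1 h2 => hmax' s ⟨h1.le, h2.le⟩⟩
  · rintro rfl
    simp at hp
  · rintro rfl
    simp at hp

/-- Lemma 2 of the paper: the average-SE function
`SE_avg(τ) = ((τ_c − τ)/τ_c) · log₂(1 + 1/(A + B/τ))` has a unique global
maximizer `τ_opt` on `(0, τ_c)`, and `0 < τ_opt < τ_c`. -/
theorem stmt_6 (A B τc : ℝ) (hA : 0 < A) (hB : 0 < B) (hτc : 0 < τc) :
    ∃! τopt : ℝ, 0 < τopt ∧ τopt < τc ∧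
      ∀ τ : ℝ, 0 < τ → τ < τc → τ ≠ τopt →
        ((τc - τ) / τc) * Real.logb 2 (1 + 1 / (A + B / τ)) <
          ((τc - τopt) / τc) * Real.logb 2 (1 + 1 / (A + B / τopt)) := by
  have key : ∀ s, 0 < s → ((τc - s) / τc) * Real.logb 2 (1 + 1 / (A + B / s))
      = ((τc - s) * Real.log (1 + s / (A * s + B))) / (τc * Real.log 2) := by
    intro s hs
    have h : 1 / (A + B / s) = s / (A * s + B) := by
      have : A + B / s = (A * s + B) / s := by field_simp
      rw [this, one_div_div]
    rw [h, Real.logb, div_mul_div_comm]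
  obtain ⟨t, ht0, htc, hmax⟩ := aux_ex A B τc hA hB hτc
  refine ⟨t, ⟨ht0, htc, ?_⟩, ?_⟩
  · intro s hs0 hsc hne
    rw [key s hs0, key t ht0]
    have hd : 0 < τc * Real.log 2 := mul_pos hτc (Real.log_pos (by norm_num))
    apply div_lt_div_of_pos_right _ hd
    have hm := hmax ((s + t) / 2) (by linarith) (by linarith)
    rcases lt_or_gt_of_ne hne with h | h
    · have := aux_mid A B τc s t hA hB hs0 h htc
      linarith
    · have := aux_mid A B τc t s hA hB ht0 h hsc
      rw [add_comm t s] at this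
      linarith
  · rintro u ⟨hu0, huc, hu⟩
    by_contra hne
    have h1 := hu t ht0 htc (Ne.symm hne)
    rw [key u hu0, key t ht0] at h1
    have hd : 0 < τc * Real.log 2 := mul_pos hτc (Real.log_pos (by norm_num))
    have h2 := (div_lt_div_iff_of_pos_right hd).1 h1
    exact absurd (hmax u hu0 huc) (not_le.2 h2)
end

section
/- Let A > 0, B > 0, and τ_c > 0 be real constants, define g(τ) = log₂(e) · ((τ_c − τ)/τ_c) · (1/(A + B/τ)) for τ > 0, and set τ* = (√(B·(B + A·τ_c)) − B)/A. Then the derivative of g at τ* equals 0. -/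
/-- The low-SNR approximate average-SE function
`g(τ) = log₂(e) · ((τ_c − τ)/τ_c) · (1/(A + B/τ))` has vanishing derivative at
the closed-form pilot length `τ* = (√(B(B + A·τ_c)) − B)/A`
(equation (20) of the paper). -/
theorem stmt_7 (A B τc : ℝ) (hA : 0 < A) (hB : 0 < B) (hτc : 0 < τc) :
    deriv (fun τ : ℝ =>
        Real.logb 2 (Real.exp 1) * ((τc - τ) / τc) * (1 / (A + B / τ)))
      ((Real.sqrt (B * (B + A * τc)) - B) / A) = 0 := by
  have hs2 : Real.sqrt (B * (B + A * τc)) ^ 2 = B * (B + A * τc) :=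
    Real.sq_sqrt (by positivity)
  have hsB : B < Real.sqrt (B * (B + A * τc)) := by
    apply Real.lt_sqrt_of_sq_lt
    have : 0 < B * (A * τc) := by positivity
    nlinarith
  generalize Real.sqrt (B * (B + A * τc)) = s at hs2 hsB
  obtain ⟨t, ht⟩ : ∃ t, t = (s - B) / A := ⟨_, rfl⟩
  rw [← ht]
  have htpos : 0 < t := by rw [ht]; exact div_pos (by linarith) hA
  have hs : s = A * t + B := by rw [ht]; field_simp; ring
  have hq : A * t ^ 2 + 2 * B * t = B * τc := by
    rw [hs] at hs2
    apply mul_left_cancel₀ hA.ne'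
    linarith
  have hD : A + B / t ≠ 0 := by positivity
  have h1 : HasDerivAt (fun τ : ℝ => A + B / τ) (-B / t ^ 2) t := by
    have := ((hasDerivAt_inv htpos.ne').const_mul B).const_add A
    have e : B * -(t ^ 2)⁻¹ = -B / t ^ 2 := by ring
    rw [e] at this
    exact this
  have h2 : HasDerivAt (fun τ : ℝ => 1 / (A + B / τ)) (-(-B / t ^ 2) / (A + B / t) ^ 2) t := by
    have := h1.fun_inv hD
    simpa only [one_div] using this
  have h3 : HasDerivAt (fun τ : ℝ => Real.logb 2 (Real.exp 1) * ((τc - τ) / τc))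
      (Real.logb 2 (Real.exp 1) * (-1 / τc)) t :=
    (((hasDerivAt_id t).const_sub τc).div_const τc).const_mul _
  rw [(h3.fun_mul h2).deriv]
  have key : (τc - t) * (B / t ^ 2) = A + B / t := by
    field_simp
    linarith
  have e : -(-B / t ^ 2) = B / t ^ 2 := by ring
  rw [e]
  calc _ = Real.logb 2 (Real.exp 1) / τc *
        (((τc - t) * (B / t ^ 2)) / (A + B / t) ^ 2 - 1 / (A + B / t)) := by ring
    _ = 0 := by
      rw [key, pow_two, div_mul_cancel_left₀ hD, one_div, sub_self, mul_zero]
end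

section
/- Let A > 0, B > 0, and τ_c > 0 be real constants, define g(τ) = log₂(e) · ((τ_c − τ)/τ_c) · (1/(A + B/τ)) for τ > 0, and set τ* = (√(B·(B + A·τ_c)) − B)/A. Then g(τ) < g(τ*) for every τ with 0 < τ < τ_c and τ ≠ τ*; that is, τ* is the unique maximizer of g on the interval (0, τ_c). -/
/-- The closed-form pilot length `τ* = (√(B(B + A·τ_c)) − B)/A` is the unique
maximizer on `(0, τ_c)` of the low-SNR approximate average-SE function
`g(τ) = log₂(e) · ((τ_c − τ)/τ_c) · (1/(A + B/τ))`. -/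
theorem stmt_8 (A B τc : ℝ) (hA : 0 < A) (hB : 0 < B) (hτc : 0 < τc) :
    ∀ τ : ℝ, 0 < τ → τ < τc → τ ≠ (Real.sqrt (B * (B + A * τc)) - B) / A →
      Real.logb 2 (Real.exp 1) * ((τc - τ) / τc) * (1 / (A + B / τ)) <
        Real.logb 2 (Real.exp 1) *
          ((τc - (Real.sqrt (B * (B + A * τc)) - B) / A) / τc) *
          (1 / (A + B / ((Real.sqrt (B * (B + A * τc)) - B) / A))) := by
  intro τ h0 h1 hne
  have hs2 : Real.sqrt (B * (B + A * τc)) ^ 2 = B * (B + A * τc) :=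
    Real.sq_sqrt (by positivity)
  have hsB : B < Real.sqrt (B * (B + A * τc)) := by
    apply Real.lt_sqrt_of_sq_lt
    have : 0 < B * (A * τc) := by positivity
    nlinarith
  generalize Real.sqrt (B * (B + A * τc)) = s at *
  have ht : 0 < (s - B) / A := div_pos (by linarith) hA
  have hs : s = A * ((s - B) / A) + B := by field_simp; ring
  generalize (s - B) / A = t at *
  subst hs
  have key : B * τc = A * t ^ 2 + 2 * B * t := by
    apply mul_left_cancel₀ hA.ne'
    linarith
  have hL : 0 < Real.logb 2 (Real.exp 1) :=
    Real.logb_pos (by norm_num) (Real.one_lt_exp_iff.mpr one_pos)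
  have e1 : ∀ x : ℝ, 0 < x → Real.logb 2 (Real.exp 1) * ((τc - x) / τc) * (1 / (A + B / x))
      = Real.logb 2 (Real.exp 1) / τc * ((τc - x) * x / (A * x + B)) := by
    intro x hx
    have : A + B / x = (A * x + B) / x := by field_simp
    rw [this, one_div_div]
    have : A * x + B ≠ 0 := by positivity
    field_simp
  rw [e1 τ h0, e1 t ht]
  apply mul_lt_mul_of_pos_left _ (div_pos hL hτc)
  have e2 : (τc - t) * t / (A * t + B) = t ^ 2 / B := by
    rw [div_eq_div_iff (by positivity) hB.ne']
    linear_combination t * key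
  rw [e2, div_lt_div_iff₀ (by positivity) hB]
  have : 0 < B * (τ - t) ^ 2 := mul_pos hB (by have := sub_ne_zero.mpr hne; positivity)
  have k2 : B * τc * τ = (A * t ^ 2 + 2 * B * t) * τ := by rw [key]
  nlinarith
end

section
/- Let (Ω, 𝔉, P) be a probability space; let M ≥ r ≥ 1 be integers and ρ > 0, β > 0, τ_p > 0 real numbers. Let R : Matrix (Fin M) (Fin M) ℂ with tr(R) = M, and U₁ : Matrix (Fin M) (Fin r) ℂ with U₁ᴴ·U₁ = I_r and (U₁·U₁ᴴ)·R = R. Let s : Ω → ℂ and h, w, n : Ω → ℂ^M be such that s, h, w, n are mutually independent; E[s] = 0 and E[|s|²] = 1; E[h_i] = 0 and E[h_i·conj(h_j)] = β·R_{i,j} for all i, j; E[(Σ_i |h_i|²)²] = β²·(tr R)² + β²·tr(R²); E[w_i] = 0 and E[w_i·conj(w_j)] = (U₁·U₁ᴴ)_{i,j}/(ρ·τ_p) for all i, j; E[n_i] = 0 and E[n_i·conj(n_j)] = δ_{ij} for all i, j; and all random variables appearing below are integrable. Define υ = √ρ·( Σ_i conj(h_i)·h_i + Σ_i conj(w_i)·h_i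 − M·β )·s + Σ_i conj(h_i + w_i)·n_i. Then E[|υ|²] = ρ·β²·tr(R²) + M·β + (1/τ_p)·( M·β + r/ρ ). -/
open MeasureTheory ProbabilityTheory

def HI {Ω : Type*} [MeasurableSpace Ω] (P : Measure Ω) (f : Ω → ℂ) (c : ℂ) : Prop :=
  Integrable f P ∧ ∫ ω, f ω ∂P = c

section
variable {Ω : Type*} [MeasurableSpace Ω] {P : Measure Ω}

theorem HI.add {f g : Ω → ℂ} {c d : ℂ} (hf : HI P f c) (hg : HI P g d) :
    HI P (fun ω => f ω + g ω) (c + d) :=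
  ⟨hf.1.add hg.1, by rw [integral_add hf.1 hg.1, hf.2, hg.2]⟩

theorem HI.cmul {f : Ω → ℂ} {c : ℂ} (k : ℂ) (hf : HI P f c) :
    HI P (fun ω => k * f ω) (k * c) :=
  ⟨hf.1.const_mul k, by rw [integral_const_mul, hf.2]⟩

theorem HI.const [IsProbabilityMeasure P] (k : ℂ) : HI P (fun _ => k) k :=
  ⟨integrable_const k, by simp⟩

theorem HI.star {f : Ω → ℂ} {c : ℂ} (hf : HI P f c) :
    HI P (fun ω => star (f ω)) (star c) := by
  refine ⟨?_, ?_⟩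
  · have := (Complex.conjCLE : ℂ →L[ℝ] ℂ).integrable_comp hf.1
    exact this
  · have := integral_conj (f := f) (μ := P) (𝕜 := ℂ)
    rw [← hf.2]; exact this

theorem HI.sum {ι : Type*} (t : Finset ι) {f : ι → Ω → ℂ} {c : ι → ℂ}
    (hf : ∀ i, HI P (f i) (c i)) :
    HI P (fun ω => ∑ i ∈ t, f i ω) (∑ i ∈ t, c i) :=
  ⟨integrable_finsetSum _ (fun i _ => (hf i).1), by
    rw [integral_finsetSum _ (fun i _ => (hf i).1)]
    exact Finset.sum_congr rfl (fun i _ => (hf i).2)⟩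

theorem HI.congr {f g : Ω → ℂ} {c d : ℂ} (hf : HI P f c) (hfg : ∀ ω, g ω = f ω) (hcd : d = c) :
    HI P g d := by
  have : g = f := funext hfg
  rw [this, hcd]; exact hf

theorem HI.mul {A B : Type*} [MeasurableSpace A] [MeasurableSpace B] {X : Ω → A} {Y : Ω → B}
    (hXY : IndepFun X Y P) {f : A → ℂ} {g : B → ℂ} (hf : Measurable f) (hg : Measurable g)
    {c d : ℂ} (h1 : HI P (fun ω => f (X ω)) c) (h2 : HI P (fun ω => g (Y ω)) d) :
    HI P (fun ω => f (X ω) * g (Y ω)) (c * d) := by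
  have hi : IndepFun (fun ω => f (X ω)) (fun ω => g (Y ω)) P := hXY.comp hf hg
  refine ⟨hi.integrable_mul h1.1 h2.1, ?_⟩
  rw [hi.integral_fun_mul_eq_mul_integral h1.1.1 h2.1.1, h1.2, h2.2]

theorem memLp_of {f : Ω → ℂ} (hf : AEStronglyMeasurable f P)
    (h2 : Integrable (fun ω => f ω * star (f ω)) P) : MemLp f 2 P := by
  rw [memLp_two_iff_integrable_sq_norm hf]
  refine h2.norm.congr (Filter.Eventually.of_forall fun ω => ?_)
  simp [sq]

end


/-- The effective noise power in the SISO channel obtained after maximum-ratio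
combining with the RS-LS channel estimate (equation (23), Appendix A):
`E[|υ|²] = ρ·β²·tr(R²) + M·β + (1/τ_p)·(M·β + r/ρ)`. -/
theorem stmt_15 {Ω : Type*} [MeasurableSpace Ω] (P : Measure Ω) [IsProbabilityMeasure P]
    (M r : ℕ) (hr : 1 ≤ r) (hrM : r ≤ M)
    (ρ β τp : ℝ) (hρ : 0 < ρ) (hβ : 0 < β) (hτp : 0 < τp)
    (R : Matrix (Fin M) (Fin M) ℂ) (htrR : Matrix.trace R = (M : ℂ))
    (U₁ : Matrix (Fin M) (Fin r) ℂ)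
    (hU : U₁.conjTranspose * U₁ = 1)
    (hUR : (U₁ * U₁.conjTranspose) * R = R)
    (s : Ω → ℂ) (h w n : Ω → Fin M → ℂ)
    -- mutual independence of s, h, w, n
    (hs_ind : IndepFun s (fun ω => (h ω, w ω, n ω)) P)
    (hh_ind : IndepFun h (fun ω => (w ω, n ω)) P)
    (hwn_ind : IndepFun w n P)
    -- moments of the data symbol
    (hEs : ∫ ω, s ω ∂P = 0)
    (hEs2 : ∫ ω, ‖s ω‖ ^ 2 ∂P = 1)
    -- moments of the channel
    (hEh0 : ∀ i, ∫ ω, h ω i ∂P = 0)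
    (hEh : ∀ i j, ∫ ω, h ω i * star (h ω j) ∂P = (β : ℂ) * R i j)
    (hEh4 : ((∫ ω, (∑ i, ‖h ω i‖ ^ 2) ^ 2 ∂P : ℝ) : ℂ) =
      (β : ℂ) ^ 2 * (Matrix.trace R) ^ 2 + (β : ℂ) ^ 2 * Matrix.trace (R * R))
    -- moments of the RS-LS estimation error
    (hEw0 : ∀ i, ∫ ω, w ω i ∂P = 0)
    (hEw : ∀ i j, ∫ ω, w ω i * star (w ω j) ∂P =
      (U₁ * U₁.conjTranspose) i j / ((ρ : ℂ) * (τp : ℂ)))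
    -- moments of the receiver noise
    (hEn0 : ∀ i, ∫ ω, n ω i ∂P = 0)
    (hEn : ∀ i j, ∫ ω, n ω i * star (n ω j) ∂P = if i = j then 1 else 0)
    -- the effective noise
    (υ : Ω → ℂ)
    (hυ : ∀ ω, υ ω =
      (Real.sqrt ρ : ℂ) *
        ((∑ i, star (h ω i) * h ω i) + (∑ i, star (w ω i) * h ω i)
          - (M : ℂ) * (β : ℂ)) * s ω
      + ∑ i, star (h ω i + w ω i) * n ω i)
    -- integrability of all the random variables appearing in the computation
    (hs_int : Integrable s P)
    (hs2_int : Integrable (fun ω => ‖s ω‖ ^ 2) P)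
    (hh_int : ∀ i, Integrable (fun ω => h ω i) P)
    (hhh_int : ∀ i j, Integrable (fun ω => h ω i * star (h ω j)) P)
    (hh4_int : Integrable (fun ω => (∑ i, ‖h ω i‖ ^ 2) ^ 2) P)
    (hw_int : ∀ i, Integrable (fun ω => w ω i) P)
    (hww_int : ∀ i j, Integrable (fun ω => w ω i * star (w ω j)) P)
    (hn_int : ∀ i, Integrable (fun ω => n ω i) P)
    (hnn_int : ∀ i j, Integrable (fun ω => n ω i * star (n ω j)) P)
    (hυ2_int : Integrable (fun ω => υ ω * star (υ ω)) P) :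
    ∫ ω, υ ω * star (υ ω) ∂P =
      (ρ : ℂ) * (β : ℂ) ^ 2 * Matrix.trace (R * R) + (M : ℂ) * (β : ℂ)
        + (1 / (τp : ℂ)) * ((M : ℂ) * (β : ℂ) + (r : ℂ) / (ρ : ℂ)) := by
  have hρ0 : (ρ : ℂ) ≠ 0 := by exact_mod_cast hρ.ne'
  have hτ0 : (τp : ℂ) ≠ 0 := by exact_mod_cast hτp.ne'
  have star0 : star (0 : ℂ) = 0 := star_zero _
  have ihw : IndepFun h w P := hh_ind.comp measurable_id measurable_fst
  have ihn : IndepFun h n P := hh_ind.comp measurable_id measurable_snd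
  have H1 : ∀ i, HI P (fun ω => h ω i) 0 := fun i => ⟨hh_int i, hEh0 i⟩
  have W1 : ∀ i, HI P (fun ω => w ω i) 0 := fun i => ⟨hw_int i, hEw0 i⟩
  have N1 : ∀ i, HI P (fun ω => n ω i) 0 := fun i => ⟨hn_int i, hEn0 i⟩
  have H2 : ∀ i j, HI P (fun ω => h ω i * star (h ω j)) (β * R i j) :=
    fun i j => ⟨hhh_int i j, hEh i j⟩
  have W2 : ∀ i j, HI P (fun ω => w ω i * star (w ω j))
      ((U₁ * U₁.conjTranspose) i j / ((ρ : ℂ) * (τp : ℂ))) := fun i j => ⟨hww_int i j, hEw i j⟩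
  have N2 : ∀ i j, HI P (fun ω => n ω i * star (n ω j)) (if i = j then 1 else 0) :=
    fun i j => ⟨hnn_int i j, hEn i j⟩
  -- the quadratic form
  let q : (Fin M → ℂ) → ℂ := fun x => ∑ i, star (x i) * x i
  have qm : Measurable q := by
    have : Continuous q := by fun_prop
    exact this.measurable
  have qre : ∀ x, q x = ((∑ i, ‖x i‖ ^ 2 : ℝ) : ℂ) := by
    intro x
    simp only [q, Complex.ofReal_sum]
    refine Finset.sum_congr rfl fun i _ => ?_
    have := Complex.conj_mul' (x i)
    push_cast
    exact this
  have qstar : ∀ x, star (q x) = q x := by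
    intro x; rw [qre]; exact Complex.conj_ofReal _
  have Q1 : HI P (fun ω => q (h ω)) (M * β) := by
    refine (HI.sum Finset.univ fun i => H2 i i).congr (fun ω => ?_) ?_
    · exact Finset.sum_congr rfl fun i _ => mul_comm _ _
    · rw [← Finset.mul_sum, ← htrR, mul_comm]; rfl
  have Q2 : HI P (fun ω => q (h ω) * q (h ω))
      ((β : ℂ) ^ 2 * (M : ℂ) ^ 2 + (β : ℂ) ^ 2 * Matrix.trace (R * R)) := by
    have e : ∀ ω, q (h ω) * q (h ω) = (((∑ i, ‖h ω i‖ ^ 2) ^ 2 : ℝ) : ℂ) := by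
      intro ω; rw [qre]; push_cast; ring
    simp only [HI, e]
    refine ⟨hh4_int.ofReal, ?_⟩
    rw [integral_complex_ofReal, hEh4, htrR]
  have QL : MemLp (fun ω => q (h ω)) 2 P :=
    memLp_of Q1.1.1 (by simpa only [qstar] using Q2.1)
  have HL : ∀ i, MemLp (fun ω => h ω i) 2 P := fun i => memLp_of (hh_int i).1 (hhh_int i i)
  let g : (Fin M → ℂ) → ℂ := fun x => q x + -(M * β : ℂ)
  have gm : Measurable g := qm.add_const _
  have gstar : ∀ x, star (g x) = g x := by
    intro x
    simp only [g, star_add, star_neg, qstar]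
    simp
  have G2 : HI P (fun ω => g (h ω) * g (h ω)) ((β : ℂ) ^ 2 * Matrix.trace (R * R)) := by
    refine ((Q2.add (Q1.cmul (-2 * (M * β)))).add (HI.const ((M * β : ℂ) ^ 2))).congr
      (fun ω => ?_) ?_
    · simp only [g]; ring
    · ring
  have GH : ∀ i, Integrable (fun ω => g (h ω) * h ω i) P := by
    intro i
    have e : ∀ ω, g (h ω) * h ω i = q (h ω) * h ω i + -(M * β : ℂ) * h ω i := by
      intro ω; simp only [g]; ring
    simp only [e]
    exact (QL.integrable_mul (HL i)).add ((hh_int i).const_mul _)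
  have GH' : ∀ i, HI P (fun ω => g (h ω) * h ω i) (∫ ω, g (h ω) * h ω i ∂P) :=
    fun i => ⟨GH i, rfl⟩
  -- coordinates are measurable
  have m1 : ∀ i : Fin M, Measurable (fun x : Fin M → ℂ => x i) := fun i => measurable_pi_apply i
  have ms : Measurable (fun z : ℂ => star z) := continuous_star.measurable
  have m1s : ∀ i : Fin M, Measurable (fun x : Fin M → ℂ => star (x i)) :=
    fun i => ms.comp (m1 i)
  have m2 : ∀ i j : Fin M, Measurable (fun x : Fin M → ℂ => x i * star (x j)) :=
    fun i j => (m1 i).mul (m1s j)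
  have gm1 : ∀ i : Fin M, Measurable (fun x : Fin M → ℂ => g x * x i) :=
    fun i => gm.mul (m1 i)
  -- part A
  have A1 : Integrable (fun ω => g (h ω) + ∑ i, star (w ω i) * h ω i) P := by
    have := HI.sum Finset.univ fun i => HI.mul ihw (m1 i) (m1s i) (H1 i) (W1 i).star
    exact (Q1.add (HI.const (-(M * β : ℂ)))).1.add (this.congr
      (g := fun ω => ∑ i, star (w ω i) * h ω i)
      (fun ω => Finset.sum_congr rfl fun i _ => mul_comm _ _) rfl).1
  have AX : HI P (fun ω => g (h ω) * ∑ i, star (w ω i) * h ω i) 0 := by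
    refine (HI.sum Finset.univ fun i => HI.mul ihw (gm1 i) (m1s i) (GH' i) (W1 i).star).congr
      (fun ω => ?_) ?_
    · rw [Finset.mul_sum]; exact Finset.sum_congr rfl fun i _ => by ring
    · simp
  have AW : HI P (fun ω => (∑ i, star (w ω i) * h ω i) * star (∑ i, star (w ω i) * h ω i))
      (M * β / (ρ * τp)) := by
    refine (HI.sum Finset.univ fun i => HI.sum Finset.univ fun j =>
      HI.mul ihw (m2 i j) (m2 j i) (H2 i j) (W2 j i)).congr (fun ω => ?_) ?_
    · rw [star_sum, Finset.sum_mul_sum]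
      refine Finset.sum_congr rfl fun i _ => Finset.sum_congr rfl fun j _ => ?_
      rw [star_mul', star_star]; ring
    · have : Matrix.trace ((U₁ * U₁.conjTranspose) * R) = M := by rw [hUR, htrR]
      rw [← this, Matrix.trace, Finset.sum_comm]
      simp only [Matrix.diag, Matrix.mul_apply (N := R), Finset.sum_mul, Finset.sum_div]
      refine Finset.sum_congr rfl fun i _ => Finset.sum_congr rfl fun j _ => ?_
      ring
  have A2 : HI P (fun ω => (g (h ω) + ∑ i, star (w ω i) * h ω i) *
      star (g (h ω) + ∑ i, star (w ω i) * h ω i))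
      ((β : ℂ) ^ 2 * Matrix.trace (R * R) + M * β / (ρ * τp)) := by
    refine (((G2.add AX).add AX.star).add AW).congr (fun ω => ?_) (by rw [star0]; ring)
    rw [star_add, star_mul', gstar]; ring
  -- part B
  have B1 : Integrable (fun ω => ∑ i, star (h ω i + w ω i) * n ω i) P := by
    refine ((HI.sum Finset.univ fun i => (HI.mul ihn (m1s i) (m1 i) (H1 i).star (N1 i)).add
      (HI.mul hwn_ind (m1s i) (m1 i) (W1 i).star (N1 i))).congr (fun ω => ?_) rfl).1
    refine Finset.sum_congr rfl fun i _ => ?_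
    rw [star_add]; ring
  have WN : ∀ i j k, HI P (fun ω => w ω i * (n ω j * star (n ω k)))
      (0 * if j = k then 1 else 0) := fun i j k =>
    HI.mul hwn_ind (m1 i) (m2 j k) (W1 i) (N2 j k)
  have WNs : ∀ i j k, HI P (fun ω => star (w ω i) * (n ω j * star (n ω k)))
      (star 0 * if j = k then 1 else 0) := fun i j k =>
    HI.mul hwn_ind (m1s i) (m2 j k) (W1 i).star (N2 j k)
  have mWN : ∀ i j k : Fin M, Measurable
      (fun x : (Fin M → ℂ) × (Fin M → ℂ) => x.1 i * (x.2 j * star (x.2 k))) := fun i j k =>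
    ((m1 i).comp measurable_fst).mul ((m2 j k).comp measurable_snd)
  have mWNs : ∀ i j k : Fin M, Measurable
      (fun x : (Fin M → ℂ) × (Fin M → ℂ) => star (x.1 i) * (x.2 j * star (x.2 k))) :=
    fun i j k => ((m1s i).comp measurable_fst).mul ((m2 j k).comp measurable_snd)
  have B2 : HI P (fun ω => (∑ i, star (h ω i + w ω i) * n ω i) *
      star (∑ i, star (h ω i + w ω i) * n ω i)) (M * β + r / (ρ * τp)) := by
    refine (HI.sum Finset.univ fun i => HI.sum Finset.univ fun j =>
      (((HI.mul ihn (m2 j i) (m2 i j) (H2 j i) (N2 i j)).add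
        (HI.mul hwn_ind (m2 j i) (m2 i j) (W2 j i) (N2 i j))).add
        (HI.mul hh_ind (m1s i) (mWN j i j) (H1 i).star (WN j i j))).add
        (HI.mul hh_ind (m1 j) (mWNs i i j) (H1 j) (WNs i i j))).congr (fun ω => ?_) ?_
    · rw [star_sum, Finset.sum_mul_sum]
      refine Finset.sum_congr rfl fun i _ => Finset.sum_congr rfl fun j _ => ?_
      simp only [star_mul', star_star, star_add]; ring
    · have e : Matrix.trace (U₁ * U₁.conjTranspose) = r := by
        rw [Matrix.trace_mul_comm, hU]; simp
      simp only [zero_mul, mul_zero, add_zero, mul_ite, mul_one, Finset.sum_add_distrib,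
        Finset.sum_ite_eq, Finset.mem_univ, if_true]
      rw [← htrR, ← e, ← Finset.mul_sum, ← Finset.sum_div, mul_comm (Matrix.trace R)]; rfl
  -- cross term
  have C : HI P (fun ω => (g (h ω) + ∑ i, star (w ω i) * h ω i) *
      star (∑ i, star (h ω i + w ω i) * n ω i))
      (∫ ω, (g (h ω) + ∑ i, star (w ω i) * h ω i) *
      star (∑ i, star (h ω i + w ω i) * n ω i) ∂P) :=
    ⟨(memLp_of A1.1 A2.1).integrable_mul (memLp_of B1.1 B2.1).star, rfl⟩
  have S1 : HI P s 0 := ⟨hs_int, hEs⟩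
  have S2 : HI P (fun ω => s ω * star (s ω)) 1 := by
    have e : ∀ ω, s ω * star (s ω) = ((‖s ω‖ ^ 2 : ℝ) : ℂ) := by
      intro ω
      have := Complex.mul_conj' (s ω)
      push_cast
      exact this
    simp only [HI, e]
    refine ⟨hs2_int.ofReal, ?_⟩
    rw [integral_complex_ofReal, hEs2]; simp
  let a : (Fin M → ℂ) × (Fin M → ℂ) × (Fin M → ℂ) → ℂ :=
    fun z => g z.1 + ∑ i, star (z.2.1 i) * z.1 i
  let b : (Fin M → ℂ) × (Fin M → ℂ) × (Fin M → ℂ) → ℂ :=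
    fun z => ∑ i, star (z.1 i + z.2.1 i) * z.2.2 i
  have am : Measurable a := by
    have : Continuous a := by fun_prop
    exact this.measurable
  have bm : Measurable b := by
    have : Continuous b := by fun_prop
    exact this.measurable
  have T1 := HI.mul hs_ind (f := fun z => z * star z) (g := fun z => a z * star (a z))
    (measurable_id.mul ms) (am.mul (ms.comp am)) S2 A2
  have T2 := HI.mul hs_ind (f := fun z => z) (g := fun z => a z * star (b z))
    measurable_id (am.mul (ms.comp bm)) S1 C
  have sq : (Real.sqrt ρ : ℂ) * (Real.sqrt ρ : ℂ) = ρ := by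
    exact_mod_cast Real.mul_self_sqrt hρ.le
  have F := (((T1.cmul ρ).add (T2.cmul (Real.sqrt ρ : ℂ))).add
    (T2.star.cmul (Real.sqrt ρ : ℂ))).add B2
  refine (F.congr (g := fun ω => υ ω * star (υ ω)) (d := _) (fun ω => ?_) ?_).2
  · have e : υ ω = (Real.sqrt ρ : ℂ) * a (h ω, w ω, n ω) * s ω + b (h ω, w ω, n ω) := by
      rw [hυ]; simp only [a, b, g, q]; ring
    have es : star (Real.sqrt ρ : ℂ) = (Real.sqrt ρ : ℂ) := Complex.conj_ofReal _
    change _ = _ + b (h ω, w ω, n ω) * star (b (h ω, w ω, n ω))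
    rw [e, ← sq]
    simp only [star_add, star_mul', star_star, es]
    ring
  · simp only [zero_mul, mul_zero, star0]
    field_simp
    ring
end
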